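/- Fix an integer k ≥ 416. Let G be a finite simple graph, L a 10-assignment for G, and α, β two L-colorings of G. Suppose G contains four distinct vertices a, b, c, d with ab, bc, cd, ac, bd edges of G, d_G(a) = d_G(d) = 5, and d_G(b) = d_G(c) = 6. Let S = {a, b, c, d}. If there exists a k-good recoloring sequence in G − S from the restriction of α to G − S to the restriction of β to G − S, then there exists a k-good recoloring sequence in G from α to β. -/

import Mathlib

def IsLColoring {V : Type} (G : SimpleGraph V) (L : V → Finset ℕ) (φ : V → ℕ) : Prop :=
  (∀ v, φ v ∈ L v) ∧ ∀ ⦃u w : V⦄, G.Adj u w → φ u ≠ φ w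

def recolorCount {V : Type} {m : ℕ} (φ : Fin (m + 1) → V → ℕ) (v : V) : ℕ :=
  (Finset.univ.filter fun i : Fin m => φ i.castSucc v ≠ φ i.succ v).card

def IsRecolSeq {V : Type} (G : SimpleGraph V) (L : V → Finset ℕ) {m : ℕ}
    (φ : Fin (m + 1) → V → ℕ) (α β : V → ℕ) : Prop :=
  φ 0 = α ∧ φ (Fin.last m) = β ∧ (∀ i, IsLColoring G L (φ i)) ∧
    ∀ i : Fin m, ∃! v : V, φ i.castSucc v ≠ φ i.succ v

/-!
Run the given recoloring sequence of `G − S` and, before each of its steps, move the vertices of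
`S` off the color about to be used next to them. A vertex of `S` has at most three neighbors
outside `S`, which are recolored at most `3k` times in total, and it always looks ahead at the
colors they are going to receive. A vertex of degree `5` with `10` colors can avoid the next four,
so it moves about `3k / 4` times; a vertex of degree `6` can only avoid the next three, which gives
the slightly too large `3k / 3`. To gain, `b` relies on its neighbor `a`, and `c` on `d`: every
sixth time it ignores the color of that neighbor, avoids the next four colors, and lets the neighbor
step aside if necessary. Each such favor costs the neighbor at most `5 / 4` additional moves, so
that all four vertices move about `18k / 19` times. The linear slack pays for the bounded number of
moves that finally bring `S` to its target colors.
-/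

open Function

section RecoloringSequences

variable {V : Type} {G : SimpleGraph V} {L : V → Finset ℕ}

theorem IsLColoring.update [DecidableEq V] {φ : V → ℕ} (hφ : IsLColoring G L φ) {v : V} {x : ℕ}
    (hx : x ∈ L v) (hfree : ∀ u, G.Adj v u → φ u ≠ x) : IsLColoring G L (update φ v x) := by
  refine ⟨fun u => ?_, fun u w huw => ?_⟩
  · rcases eq_or_ne u v with rfl | hu
    · rwa [update_self]
    · rw [update_of_ne hu]
      exact hφ.1 u
  · rcases eq_or_ne u v with rfl | hu
    · rw [update_self, update_of_ne huw.ne.symm]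
      exact (hfree w huw).symm
    · rcases eq_or_ne w v with rfl | hw
      · rw [update_self, update_of_ne hu]
        exact hfree u huw.symm
      · rw [update_of_ne hu, update_of_ne hw]
        exact hφ.2 huw

theorem recolorCount_snoc {m : ℕ} (ψ : Fin (m + 1) → V → ℕ) (χ : V → ℕ) (v : V) :
    recolorCount (Fin.snoc (α := fun _ => V → ℕ) ψ χ) v =
      recolorCount ψ v + if ψ (Fin.last m) v ≠ χ v then 1 else 0 := by
  simp only [recolorCount, Finset.card_filter, Fin.sum_univ_castSucc, Fin.succ_castSucc,
    Fin.snoc_castSucc, Fin.succ_last, Fin.snoc_last]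

theorem recolorCount_succ {m : ℕ} (ψ : Fin (m + 2) → V → ℕ) (v : V) :
    recolorCount ψ v = (if ψ 0 v ≠ ψ 1 v then 1 else 0) + recolorCount (Fin.tail ψ) v := by
  simp only [recolorCount, Finset.card_filter, Fin.sum_univ_succ]
  rfl

theorem IsRecolSeq.snoc [DecidableEq V] {m : ℕ} {ψ : Fin (m + 1) → V → ℕ} {α φ : V → ℕ}
    (hψ : IsRecolSeq G L ψ α φ) {v : V} {x : ℕ} (hx : x ∈ L v) (hne : φ v ≠ x)
    (hfree : ∀ u, G.Adj v u → φ u ≠ x) :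
    IsRecolSeq G L (Fin.snoc (α := fun _ => V → ℕ) ψ (update φ v x)) α (update φ v x) := by
  obtain ⟨hfirst, rfl, hcol, hstep⟩ := hψ
  refine ⟨?_, Fin.snoc_last .., Fin.lastCases ?_ fun i => ?_, Fin.lastCases ?_ fun i => ?_⟩
  · rw [← Fin.castSucc_zero, Fin.snoc_castSucc, hfirst]
  · rw [Fin.snoc_last]
    exact (hcol _).update hx hfree
  · rw [Fin.snoc_castSucc]
    exact hcol i
  · rw [Fin.snoc_castSucc, Fin.succ_last, Fin.snoc_last]
    refine ⟨v, by simpa only [update_self] using hne, fun u hu => ?_⟩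
    by_contra huv
    exact hu (update_of_ne huv ..).symm
  · rw [Fin.snoc_castSucc, Fin.succ_castSucc, Fin.snoc_castSucc]
    exact hstep i

theorem IsRecolSeq.tail {m : ℕ} {ψ : Fin (m + 2) → V → ℕ} {α β : V → ℕ}
    (hψ : IsRecolSeq G L ψ α β) : IsRecolSeq G L (Fin.tail ψ) (ψ 1) β :=
  ⟨rfl, hψ.2.1, fun i => hψ.2.2.1 i.succ, fun i => hψ.2.2.2 i.succ⟩

/-- `IsMoveList G L ms φ ψ` says that the moves of `ms`, performed one after the other, recolor `φ`
into `ψ` through proper colorings; the move `(v, x)` gives the new color `x` to the vertex `v`.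
Unlike a sequence of colorings, a list of moves shows at once which colors are going to be used. -/
inductive IsMoveList [DecidableEq V] (G : SimpleGraph V) (L : V → Finset ℕ) :
    List (V × ℕ) → (V → ℕ) → (V → ℕ) → Prop
  | nil (φ : V → ℕ) : IsMoveList G L [] φ φ
  | cons {v : V} {x : ℕ} {ms : List (V × ℕ)} {φ ψ : V → ℕ} (hx : x ∈ L v) (hne : φ v ≠ x)
      (hfree : ∀ u, G.Adj v u → φ u ≠ x) (hms : IsMoveList G L ms (update φ v x) ψ) :
      IsMoveList G L ((v, x) :: ms) φ ψ

theorem IsRecolSeq.exists_isMoveList [DecidableEq V] {m : ℕ} {φ : Fin (m + 1) → V → ℕ}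
    {α β : V → ℕ} (hφ : IsRecolSeq G L φ α β) :
    ∃ ms, IsMoveList G L ms α β ∧ ∀ v, ms.countP (·.1 = v) = recolorCount φ v := by
  induction m generalizing α with
  | zero =>
    obtain ⟨rfl, rfl, -, -⟩ := hφ
    exact ⟨[], .nil _, fun v => by simp [recolorCount]⟩
  | succ m ih =>
    obtain ⟨ms, hms, hcount⟩ := ih hφ.tail
    obtain ⟨rfl, -, hcol, hstep⟩ := hφ
    obtain ⟨w, hw : φ 0 w ≠ φ 1 w, hunique⟩ := hstep 0
    have hfix : ∀ u ≠ w, φ 1 u = φ 0 u := fun u hu => by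
      by_contra hne
      exact hu (hunique u (Ne.symm hne))
    have hupdate : φ 1 = update (φ 0) w (φ 1 w) := eq_update_iff.2 ⟨rfl, hfix⟩
    refine ⟨(w, φ 1 w) :: ms, .cons ((hcol 1).1 w) hw (fun u hu => ?_) (hupdate ▸ hms),
      fun v => ?_⟩
    · rw [← hfix u hu.ne.symm]
      exact ((hcol 1).2 hu).symm
    · have hchange : w = v ↔ φ 0 v ≠ φ 1 v := ⟨fun h => h ▸ hw, fun h => (hunique v h).symm⟩
      simp only [List.countP_cons, decide_eq_true_eq, hchange, hcount, recolorCount_succ φ v,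
        add_comm]

/-- A state `σ` records for each vertex its current color and the number of times it has been
recolored. `IsReachable G L α σ` says that some recoloring sequence starting at `α` leads to `σ`. -/
def IsReachable (G : SimpleGraph V) (L : V → Finset ℕ) (α : V → ℕ) (σ : V → ℕ × ℕ) : Prop :=
  ∃ (m : ℕ) (ψ : Fin (m + 1) → V → ℕ),
    IsRecolSeq G L ψ α (fun v => (σ v).1) ∧ ∀ v, recolorCount ψ v = (σ v).2

theorem IsLColoring.isReachable {α : V → ℕ} (hα : IsLColoring G L α) :
    IsReachable G L α fun v => (α v, 0) :=
  ⟨0, fun _ => α, ⟨rfl, rfl, fun _ => hα, fun i => i.elim0⟩, fun _ => by simp [recolorCount]⟩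

theorem IsReachable.recolor [DecidableEq V] {α : V → ℕ} {σ : V → ℕ × ℕ}
    (hσ : IsReachable G L α σ) {v : V} {x : ℕ} (hx : x ∈ L v) (hne : (σ v).1 ≠ x)
    (hfree : ∀ u, G.Adj v u → (σ u).1 ≠ x) :
    IsReachable G L α (update σ v (x, (σ v).2 + 1)) := by
  obtain ⟨m, ψ, hψ, hcount⟩ := hσ
  have hcolors : (fun u => (update σ v (x, (σ v).2 + 1) u).1) = update (fun u => (σ u).1) v x :=
    funext fun u => apply_update (fun _ => Prod.fst) σ v _ u
  refine ⟨m + 1, _, hcolors ▸ hψ.snoc hx hne hfree, fun u => ?_⟩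
  rw [recolorCount_snoc, hψ.2.1, hcount]
  rcases eq_or_ne u v with rfl | hu
  · simp only [update_self, ne_eq, hne, not_false_eq_true, if_true]
  · simp only [update_of_ne hu, ne_eq, not_true_eq_false, if_false, add_zero]

end RecoloringSequences

theorem exists_mem_forall_ne_notMem {ι κ : Type*} (C : Finset κ) (T : Finset ι) (φ : ι → κ)
    (f : List κ) (h : T.card + f.length < C.card) : ∃ y ∈ C, (∀ u ∈ T, φ u ≠ y) ∧ y ∉ f := by
  classical
  have hcard : (T.image φ ∪ f.toFinset).card < C.card :=
    calc (T.image φ ∪ f.toFinset).card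
      _ ≤ (T.image φ).card + f.toFinset.card := Finset.card_union_le ..
      _ ≤ T.card + f.length := add_le_add Finset.card_image_le (List.toFinset_card_le f)
      _ < C.card := h
  obtain ⟨y, hyC, hy⟩ := Finset.exists_mem_notMem_of_card_lt_card hcard
  simp only [Finset.mem_union, Finset.mem_image, List.mem_toFinset, not_or, not_exists,
    not_and] at hy
  exact ⟨y, hyC, hy.1, hy.2⟩

section TargetColors

variable {V : Type} {G : SimpleGraph V} [G.LocallyFinite] {L : V → Finset ℕ} {α β : V → ℕ}
  {σ : V → ℕ × ℕ}

theorem IsReachable.exists_recolor [DecidableEq V] (hσ : IsReachable G L α σ) {v : V}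
    {f : List ℕ} (hcard : G.degree v + f.length < (L v).card) (hmem : (σ v).1 ∈ f) :
    ∃ y ∉ f, IsReachable G L α (update σ v (y, (σ v).2 + 1)) := by
  obtain ⟨y, hyL, hfree, hyf⟩ :=
    exists_mem_forall_ne_notMem (L v) (G.neighborFinset v) (fun u => (σ u).1) f hcard
  exact ⟨y, hyf, hσ.recolor hyL (fun h => hyf (h ▸ hmem))
    fun u hu => hfree u ((G.mem_neighborFinset v u).2 hu)⟩

theorem IsReachable.exists_forall_ne (hσ : IsReachable G L α σ) (x : ℕ) {W : Finset V}
    (hW : ∀ u ∈ W, G.degree u + 2 ≤ (L u).card) :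
    ∃ σ', IsReachable G L α σ' ∧ (∀ u ∉ W, σ' u = σ u) ∧ (∀ u, (σ' u).2 ≤ (σ u).2 + 1) ∧
      ∀ u ∈ W, (σ' u).1 ≠ x := by
  classical
  induction W using Finset.induction_on with
  | empty => exact ⟨σ, hσ, fun _ _ => rfl, fun _ => Nat.le_succ _, by simp⟩
  | insert v W hv ih =>
    obtain ⟨hWv, hW⟩ := Finset.forall_mem_insert .. |>.1 hW
    obtain ⟨τ, hτ, hfix, hcount, hne⟩ := ih hW
    by_cases hx : (τ v).1 = x
    · obtain ⟨y, hy, hy_reach⟩ := hτ.exists_recolor (v := v) (f := [x])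
        (by rw [List.length_singleton]; omega) (by simp [hx])
      refine ⟨_, hy_reach, fun u hu => ?_, fun u => ?_, fun u hu => ?_⟩
      · rw [Finset.mem_insert, not_or] at hu
        rw [update_of_ne hu.1, hfix u hu.2]
      · rcases eq_or_ne u v with rfl | huv
        · rw [update_self, hfix u hv]
        · rw [update_of_ne huv]
          exact hcount u
      · rcases eq_or_ne u v with rfl | huv
        · rw [update_self]
          simpa using hy
        · rw [update_of_ne huv]
          exact hne u (Finset.mem_of_mem_insert_of_ne hu huv)
    · exact ⟨τ, hτ, fun u hu => hfix u fun h => hu (Finset.mem_insert_of_mem h), hcount,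
        Finset.forall_mem_insert .. |>.2 ⟨hx, hne⟩⟩

theorem IsReachable.exists_recolor_target [DecidableEq V] (hσ : IsReachable G L α σ)
    (hβ : IsLColoring G L β) {v : V} {W : Finset V} (hv : v ∉ W)
    (hW : ∀ u ∈ W, G.degree u + 2 ≤ (L u).card) (hσβ : ∀ u ∉ insert v W, (σ u).1 = β u) :
    ∃ σ', IsReachable G L α σ' ∧ (∀ u ∉ W, (σ' u).1 = β u) ∧
      (∀ u ∉ insert v W, σ' u = σ u) ∧ ∀ u, (σ' u).2 ≤ (σ u).2 + 1 := by
  obtain ⟨τ, hτ, hfix, hcount, hne⟩ := hσ.exists_forall_ne (β v) hW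
  have hfix' : ∀ u ∉ insert v W, τ u = σ u :=
    fun u hu => hfix u fun h => hu (Finset.mem_insert_of_mem h)
  have hτβ : ∀ u ∉ W, u ≠ v → (τ u).1 = β u := fun u hu huv => by
    rw [hfix u hu]
    exact hσβ u (by simp [hu, huv])
  by_cases hx : (τ v).1 = β v
  · refine ⟨τ, hτ, fun u hu => ?_, hfix', hcount⟩
    rcases eq_or_ne u v with rfl | huv
    · exact hx
    · exact hτβ u hu huv
  · have hfree : ∀ u, G.Adj v u → (τ u).1 ≠ β v := fun u hvu => by
      by_cases hu : u ∈ W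
      · exact hne u hu
      · rw [hτβ u hu hvu.ne.symm]
        exact (hβ.2 hvu).symm
    refine ⟨_, hτ.recolor (hβ.1 v) hx hfree, fun u hu => ?_, fun u hu => ?_, fun u => ?_⟩
    · rcases eq_or_ne u v with rfl | huv
      · rw [update_self]
      · rw [update_of_ne huv]
        exact hτβ u hu huv
    · have huv : u ≠ v := fun h => hu (Finset.mem_insert.2 (.inl h))
      rw [update_of_ne huv, hfix' u hu]
    · rcases eq_or_ne u v with rfl | huv
      · rw [update_self, hfix u hv]
      · rw [update_of_ne huv]
        exact hcount u

theorem IsReachable.exists_eq_target (hσ : IsReachable G L α σ) (hβ : IsLColoring G L β)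
    {W : Finset V} (hW : ∀ u ∈ W, G.degree u + 2 ≤ (L u).card)
    (hσβ : ∀ u ∉ W, (σ u).1 = β u) :
    ∃ σ', IsReachable G L α σ' ∧ (∀ u, (σ' u).1 = β u) ∧ (∀ u ∉ W, σ' u = σ u) ∧
      ∀ u, (σ' u).2 ≤ (σ u).2 + W.card := by
  classical
  induction W using Finset.induction_on generalizing σ with
  | empty => exact ⟨σ, hσ, by simpa using hσβ, fun _ _ => rfl, fun _ => le_rfl⟩
  | insert v W hv ih =>
    have hW' : ∀ u ∈ W, G.degree u + 2 ≤ (L u).card :=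
      fun u hu => hW u (Finset.mem_insert_of_mem hu)
    obtain ⟨τ, hτ, hτβ, hτfix, hτcount⟩ := hσ.exists_recolor_target hβ hv hW' hσβ
    obtain ⟨σ', hσ', hσ'β, hfix, hcount⟩ := ih hτ hW' hτβ
    refine ⟨σ', hσ', hσ'β, fun u hu => ?_, fun u => ?_⟩
    · rw [hfix u fun h => hu (Finset.mem_insert_of_mem h), hτfix u hu]
    · rw [Finset.card_insert_of_notMem hv]
      have := hcount u
      have := hτcount u
      omega

end TargetColors

/-- The amortized accounting for one vertex: its color is `y`, the colors its neighbors are about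
to receive are `f`, in this order, and it has spent `spent` out of `budget`. Every entry of `f`
costs one unit, and the first `q` entries, which `y` is known to avoid, have been paid in
advance. -/
def Affords (f : List ℕ) (y spent budget : ℕ) : Prop :=
  ∃ q ≤ 4, y ∉ f.take q ∧ spent + f.length ≤ budget + q

namespace Affords

variable {f : List ℕ} {x y z c c' B B' : ℕ}

theorem of_add_length_le (y : ℕ) (h : c + f.length ≤ B) : Affords f y c B :=
  ⟨0, Nat.zero_le 4, by simp, h⟩

theorem le_add_four (h : Affords [] y c B) : c ≤ B + 4 := by
  obtain ⟨q, hq, -, hle⟩ := h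
  rw [List.length_nil] at hle
  omega

theorem mono (h : Affords f y c B) (hle : c' + B ≤ c + B') : Affords f y c' B' := by
  obtain ⟨q, hq, hy, hq_le⟩ := h
  exact ⟨q, hq, hy, by omega⟩

theorem of_cons (h : Affords (x :: f) y c B) : Affords f y c B := by
  obtain ⟨q, hq, hy, hle⟩ := h
  rw [List.length_cons] at hle
  cases q with
  | zero => exact of_add_length_le y (by omega)
  | succ q =>
    rw [List.take_succ_cons, List.mem_cons, not_or] at hy
    exact ⟨q, by omega, hy.2, by omega⟩

theorem add_length_le_of_mem_take_one (h : Affords f y c B) (hy : y ∈ f.take 1) :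
    c + f.length ≤ B := by
  obtain ⟨q, -, hyq, hle⟩ := h
  cases q with
  | zero => exact hle
  | succ q => exact absurd (List.take_subset_take_left f (Nat.le_add_left 1 q) hy) hyq

theorem recolor (h : Affords f y c B) (hy : y ∈ f.take 1) {q : ℕ} (hq : q ≤ 4)
    (hz : z ∉ f.take q) : Affords f z (c + q) B :=
  ⟨q, hq, hz, by have := h.add_length_le_of_mem_take_one hy; omega⟩

/-- Up to four prepaid units are forfeited, and only three of the four spent now prepay again: this
accounts for the five additional units. -/
theorem step_aside (h : Affords f y c B) (hz : z ∉ f.take 3) : Affords f z (c + 4) (B + 5) := by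
  obtain ⟨q, hq, -, hle⟩ := h
  exact ⟨3, by norm_num, hz, by omega⟩

end Affords

/-- A pair of adjacent vertices in which the first one has enough colors to look four colors ahead
and to step aside for the second one. -/
structure IsReliefPair {V : Type} (G : SimpleGraph V) [G.LocallyFinite] (L : V → Finset ℕ)
    (a b : V) : Prop where
  adj : G.Adj a b
  card_left : G.degree a + 5 ≤ (L a).card
  card_right : G.degree b + 4 ≤ (L b).card

/-- The accounts of a relief pair `(a, b)` in the state `σ`, when `f v` lists the colors about to be
used next to `v`. Every sixth recoloring of `b` looks four colors ahead instead of three, and every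
time the budget of `a` is raised by five. -/
def PairAffords {V : Type} (k : ℕ) (f : V → List ℕ) (σ : V → ℕ × ℕ) (a b : V) : Prop :=
  Affords (f a) (σ a).1 (4 * (σ a).2) (3 * k + 5 * ((σ b).2 / 6)) ∧
    Affords (f b) (σ b).1 (3 * (σ b).2 + (σ b).2 / 6) (3 * k)

theorem PairAffords.congr {V : Type} {k : ℕ} {f : V → List ℕ} {σ σ' : V → ℕ × ℕ} {a b : V}
    (h : PairAffords k f σ a b) (ha : σ' a = σ a) (hb : σ' b = σ b) : PairAffords k f σ' a b := by
  rwa [PairAffords, ha, hb]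

section ReliefPairs

variable {V : Type} {G : SimpleGraph V} [G.LocallyFinite] {L : V → Finset ℕ} {α : V → ℕ}
  {σ : V → ℕ × ℕ} {k : ℕ} {f : V → List ℕ} {a b : V}

theorem IsReliefPair.exists_left_notMem_take_one (hab : IsReliefPair G L a b)
    (hσ : IsReachable G L α σ) (hf : PairAffords k f σ a b) :
    ∃ σ', IsReachable G L α σ' ∧ (∀ u ≠ a, σ' u = σ u) ∧ PairAffords k f σ' a b ∧
      (σ' a).1 ∉ (f a).take 1 := by
  classical
  by_cases ha : (σ a).1 ∈ (f a).take 1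
  · have hcard := hab.card_left
    obtain ⟨y, hy, hy_reach⟩ := hσ.exists_recolor (v := a) (f := (f a).take 4)
      (by rw [List.length_take]; omega) (List.take_subset_take_left _ (by norm_num) ha)
    refine ⟨_, hy_reach, fun u hu => update_of_ne hu .., ⟨?_, ?_⟩, ?_⟩
    · rw [update_self, update_of_ne hab.adj.ne.symm]
      exact (hf.1.recolor ha le_rfl hy).mono (by omega)
    · rw [update_of_ne hab.adj.ne.symm]
      exact hf.2
    · rw [update_self]
      exact fun h => hy (List.take_subset_take_left _ (by norm_num) h)
  · exact ⟨σ, hσ, fun _ _ => rfl, hf, ha⟩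

theorem IsReliefPair.exists_left_ne (hab : IsReliefPair G L a b) (hσ : IsReachable G L α σ)
    {B : ℕ} {g : List ℕ} (hg : Affords g (σ a).1 (4 * (σ a).2) B) (y : ℕ) :
    ∃ σ', IsReachable G L α σ' ∧ (∀ u ≠ a, σ' u = σ u) ∧ (σ' a).1 ≠ y ∧
      Affords g (σ' a).1 (4 * (σ' a).2) (B + 5) := by
  classical
  by_cases hy : (σ a).1 = y
  · have hcard := hab.card_left
    obtain ⟨z, hz, hz_reach⟩ := hσ.exists_recolor (v := a) (f := y :: g.take 3)
      (by rw [List.length_cons, List.length_take]; omega) (by simp [hy])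
    rw [List.mem_cons, not_or] at hz
    refine ⟨_, hz_reach, fun u hu => update_of_ne hu .., ?_, ?_⟩ <;> rw [update_self]
    · exact hz.1
    · exact (hg.step_aside hz.2).mono (by omega)
  · exact ⟨σ, hσ, fun _ _ => rfl, hy, hg.mono (by omega)⟩

theorem IsReliefPair.exists_recolor_right_of_div_eq (hab : IsReliefPair G L a b)
    (hσ : IsReachable G L α σ) (hf : PairAffords k f σ a b) (hb : (σ b).1 ∈ (f b).take 1)
    (hdiv : ((σ b).2 + 1) / 6 = (σ b).2 / 6) :
    ∃ σ', IsReachable G L α σ' ∧ (∀ u, u ≠ a → u ≠ b → σ' u = σ u) ∧ PairAffords k f σ' a b ∧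
      (σ' b).1 ∉ (f b).take 1 := by
  classical
  have hcard := hab.card_right
  obtain ⟨y, hy, hy_reach⟩ := hσ.exists_recolor (v := b) (f := (f b).take 3)
    (by rw [List.length_take]; omega) (List.take_subset_take_left _ (by norm_num) hb)
  refine ⟨_, hy_reach, fun u _ hu => update_of_ne hu .., ⟨?_, ?_⟩, ?_⟩
  · rw [update_self, update_of_ne hab.adj.ne, hdiv]
    exact hf.1
  · rw [update_self]
    exact (hf.2.recolor hb (by norm_num) hy).mono (by omega)
  · rw [update_self]
    exact fun h => hy (List.take_subset_take_left _ (by norm_num) h)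

/-- The relief step: `b` ignores the color of `a`, which frees a color to look further ahead. -/
theorem IsReliefPair.exists_recolor_right_of_div_eq_add_one (hab : IsReliefPair G L a b)
    (hσ : IsReachable G L α σ) (hf : PairAffords k f σ a b) (hb : (σ b).1 ∈ (f b).take 1)
    (hdiv : ((σ b).2 + 1) / 6 = (σ b).2 / 6 + 1) :
    ∃ σ', IsReachable G L α σ' ∧ (∀ u, u ≠ a → u ≠ b → σ' u = σ u) ∧ PairAffords k f σ' a b ∧
      (σ' b).1 ∉ (f b).take 1 := by
  classical
  have hba : a ∈ G.neighborFinset b := (G.mem_neighborFinset b a).2 hab.adj.symm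
  have hcard : ((G.neighborFinset b).erase a).card + ((f b).take 4).length < (L b).card := by
    have := hab.card_right
    have := Finset.card_erase_add_one hba
    rw [G.card_neighborFinset_eq_degree] at this
    rw [List.length_take]
    omega
  obtain ⟨y, hyL, hfree, hy⟩ := exists_mem_forall_ne_notMem _ _ (fun u => (σ u).1) _ hcard
  have hy_one : y ∉ (f b).take 1 := fun h => hy (List.take_subset_take_left _ (by norm_num) h)
  obtain ⟨τ, hτ, hfix, hτa, hτf⟩ := hab.exists_left_ne hσ hf.1 y
  have hτb : τ b = σ b := hfix b hab.adj.ne.symm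
  have hτfree : ∀ u, G.Adj b u → (τ u).1 ≠ y := fun u hbu => by
    rcases eq_or_ne u a with rfl | hua
    · exact hτa
    · rw [hfix u hua]
      exact hfree u (Finset.mem_erase.2 ⟨hua, (G.mem_neighborFinset b u).2 hbu⟩)
  refine ⟨_, hτ.recolor hyL (fun h => hy_one (h ▸ hτb ▸ hb)) hτfree, fun u hua hub => ?_,
    ⟨?_, ?_⟩, ?_⟩
  · rw [update_of_ne hub, hfix u hua]
  · rw [update_self, update_of_ne hab.adj.ne, hτb, hdiv]
    exact hτf.mono (by omega)
  · rw [update_self, hτb]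
    exact (hf.2.recolor hb le_rfl hy).mono (by omega)
  · rwa [update_self]

theorem IsReliefPair.exists_right_notMem_take_one (hab : IsReliefPair G L a b)
    (hσ : IsReachable G L α σ) (hf : PairAffords k f σ a b) :
    ∃ σ', IsReachable G L α σ' ∧ (∀ u, u ≠ a → u ≠ b → σ' u = σ u) ∧ PairAffords k f σ' a b ∧
      (σ' b).1 ∉ (f b).take 1 := by
  by_cases hb : (σ b).1 ∈ (f b).take 1
  · have hdiv : ((σ b).2 + 1) / 6 = (σ b).2 / 6 ∨ ((σ b).2 + 1) / 6 = (σ b).2 / 6 + 1 := by omega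
    rcases hdiv with hdiv | hdiv
    · exact hab.exists_recolor_right_of_div_eq hσ hf hb hdiv
    · exact hab.exists_recolor_right_of_div_eq_add_one hσ hf hb hdiv
  · exact ⟨σ, hσ, fun _ _ _ => rfl, hf, hb⟩

theorem IsReliefPair.exists_notMem_take_one (hab : IsReliefPair G L a b)
    (hσ : IsReachable G L α σ) (hf : PairAffords k f σ a b) :
    ∃ σ', IsReachable G L α σ' ∧ (∀ u, u ≠ a → u ≠ b → σ' u = σ u) ∧ PairAffords k f σ' a b ∧
      (σ' a).1 ∉ (f a).take 1 ∧ (σ' b).1 ∉ (f b).take 1 := by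
  obtain ⟨τ, hτ, hτfix, hτf, hb⟩ := hab.exists_right_notMem_take_one hσ hf
  obtain ⟨σ', hσ', hfix, hσ'f, ha⟩ := hab.exists_left_notMem_take_one hτ hτf
  refine ⟨σ', hσ', fun u hua hub => (hfix u hua).trans (hτfix u hua hub), hσ'f, ha, ?_⟩
  rwa [hfix b hab.adj.ne.symm]

/-- The set of vertices occurring in the pairs of `P`. -/
def pairSupport [DecidableEq V] (P : Finset (V × V)) : Finset V :=
  P.biUnion fun p => {p.1, p.2}

theorem mem_pairSupport [DecidableEq V] {P : Finset (V × V)} {v : V} :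
    v ∈ pairSupport P ↔ ∃ p ∈ P, v = p.1 ∨ v = p.2 := by
  simp only [pairSupport, Finset.mem_biUnion, Finset.mem_insert, Finset.mem_singleton]

theorem card_pairSupport_le [DecidableEq V] (P : Finset (V × V)) :
    (pairSupport P).card ≤ P.card * 2 :=
  Finset.card_biUnion_le_card_mul _ _ _ fun _ _ => Finset.card_le_two

theorem pairSupport_insert [DecidableEq V] (p : V × V) (P : Finset (V × V)) :
    pairSupport (insert p P) = {p.1, p.2} ∪ pairSupport P :=
  Finset.biUnion_insert

theorem exists_forall_pairSupport_notMem_take_one [DecidableEq V] {P : Finset (V × V)}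
    (hdisj : (P : Set (V × V)).PairwiseDisjoint fun p => ({p.1, p.2} : Finset V))
    (hP : ∀ p ∈ P, IsReliefPair G L p.1 p.2) (hσ : IsReachable G L α σ)
    (hf : ∀ p ∈ P, PairAffords k f σ p.1 p.2) :
    ∃ σ', IsReachable G L α σ' ∧ (∀ u ∉ pairSupport P, σ' u = σ u) ∧
      (∀ p ∈ P, PairAffords k f σ' p.1 p.2) ∧
      ∀ v ∈ pairSupport P, (σ' v).1 ∉ (f v).take 1 := by
  induction P using Finset.induction_on with
  | empty => exact ⟨σ, hσ, fun _ _ => rfl, hf, by simp [pairSupport]⟩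
  | insert p P hp ih =>
    rw [Finset.forall_mem_insert] at hP hf
    rw [Finset.coe_insert, Set.pairwiseDisjoint_insert_of_notMem (by simpa using hp)] at hdisj
    obtain ⟨τ, hτ, hτfix, hτf, hτclear⟩ := ih hdisj.1 hP.2 hf.2
    have hp_disj : Disjoint {p.1, p.2} (pairSupport P) :=
      (Finset.disjoint_biUnion_right _ _ _).2 hdisj.2
    simp only [Finset.disjoint_insert_left, Finset.disjoint_singleton_left] at hp_disj
    obtain ⟨σ', hσ', hfix, hσ'f, hclear⟩ :=
      hP.1.exists_notMem_take_one hτ (hf.1.congr (hτfix _ hp_disj.1) (hτfix _ hp_disj.2))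
    have hfixP : ∀ v ∈ pairSupport P, σ' v = τ v := fun v hv =>
      hfix v (ne_of_mem_of_not_mem hv hp_disj.1) (ne_of_mem_of_not_mem hv hp_disj.2)
    simp only [pairSupport_insert, Finset.mem_union, Finset.mem_insert, Finset.mem_singleton,
      not_or, or_imp, forall_and, forall_eq]
    refine ⟨σ', hσ', fun u hu => (hfix u hu.1.1 hu.1.2).trans (hτfix u hu.2),
      ⟨hσ'f, fun q hq => (hτf q hq).congr (hfixP _ ?_) (hfixP _ ?_)⟩, hclear, fun v hv => ?_⟩
    · exact mem_pairSupport.2 ⟨q, hq, .inl rfl⟩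
    · exact mem_pairSupport.2 ⟨q, hq, .inr rfl⟩
    · rw [hfixP v hv]
      exact hτclear v hv

end ReliefPairs

/-- The colors that the moves of `ms` give to the vertices of `N`, in order. -/
def upcomingColors {W : Type} [DecidableEq W] (N : Finset W) (ms : List (W × ℕ)) : List ℕ :=
  (ms.filter fun m => m.1 ∈ N).map Prod.snd

section UpcomingColors

variable {W : Type} [DecidableEq W] {N : Finset W}

theorem upcomingColors_cons_of_mem {w : W} (hw : w ∈ N) (x : ℕ) (ms : List (W × ℕ)) :
    upcomingColors N ((w, x) :: ms) = x :: upcomingColors N ms := by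
  simp only [upcomingColors, List.filter_cons, hw, decide_true, if_true, List.map_cons]

theorem upcomingColors_cons_of_notMem {w : W} (hw : w ∉ N) (x : ℕ) (ms : List (W × ℕ)) :
    upcomingColors N ((w, x) :: ms) = upcomingColors N ms := by
  simp only [upcomingColors, List.filter_cons, hw, decide_false, Bool.false_eq_true, if_false]

theorem length_upcomingColors (N : Finset W) (ms : List (W × ℕ)) :
    (upcomingColors N ms).length = ∑ w ∈ N, ms.countP (·.1 = w) := by
  induction ms with
  | nil => simp [upcomingColors]
  | cons m ms ih =>
    obtain ⟨w, x⟩ := m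
    simp only [List.countP_cons, Finset.sum_add_distrib, ← ih, decide_eq_true_eq,
      Finset.sum_ite_eq]
    by_cases hw : w ∈ N
    · rw [upcomingColors_cons_of_mem hw, List.length_cons, if_pos hw]
    · rw [upcomingColors_cons_of_notMem hw, if_neg hw, add_zero]

theorem Affords.of_upcomingColors_cons {m : W × ℕ} {ms : List (W × ℕ)} {y c B : ℕ}
    (h : Affords (upcomingColors N (m :: ms)) y c B) : Affords (upcomingColors N ms) y c B := by
  by_cases hm : m.1 ∈ N
  · rw [upcomingColors_cons_of_mem hm] at h
    exact h.of_cons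
  · rwa [upcomingColors_cons_of_notMem hm] at h

end UpcomingColors

open Classical in
/-- The neighbors of `v` outside `S`, as vertices of `G − S`. -/
noncomputable def outerNeighborFinset {V : Type} (G : SimpleGraph V) [G.LocallyFinite] (S : Set V)
    (v : V) : Finset ↥(Sᶜ) :=
  (G.neighborFinset v).subtype (· ∈ Sᶜ)

section Extension

variable {V : Type} {G : SimpleGraph V} [G.LocallyFinite] {L : V → Finset ℕ} {α β : V → ℕ} {k : ℕ}

theorem mem_outerNeighborFinset {S : Set V} {v : V} {w : ↥(Sᶜ)} :
    w ∈ outerNeighborFinset G S v ↔ G.Adj v w := by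
  classical
  rw [outerNeighborFinset, Finset.mem_subtype, G.mem_neighborFinset]

theorem card_outerNeighborFinset_add_card_le {S : Set V} {v : V} {T : Finset V}
    (hTv : ∀ u ∈ T, G.Adj v u) (hTS : ∀ u ∈ T, u ∈ S) :
    (outerNeighborFinset G S v).card + T.card ≤ G.degree v := by
  classical
  rw [outerNeighborFinset, Finset.card_subtype, ← Finset.card_union_of_disjoint,
    ← G.card_neighborFinset_eq_degree]
  · exact Finset.card_le_card (Finset.union_subset (Finset.filter_subset _ _)
      fun u hu => (G.mem_neighborFinset v u).2 (hTv u hu))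
  · exact Finset.disjoint_left.2 fun u hu hu' => (Finset.mem_filter.1 hu).2 (hTS u hu')

theorem exists_isReachable_update [DecidableEq V] {P : Finset (V × V)}
    (hdisj : (P : Set (V × V)).PairwiseDisjoint fun p => ({p.1, p.2} : Finset V))
    (hP : ∀ p ∈ P, IsReliefPair G L p.1 p.2) {S : Set V} (hS : ∀ v, v ∈ S ↔ v ∈ pairSupport P)
    {w : ↥(Sᶜ)} {x : ℕ} {ms : List (↥(Sᶜ) × ℕ)} {σ : V → ℕ × ℕ} (hσ : IsReachable G L α σ)
    (hx : x ∈ L w) (hne : (σ w).1 ≠ x) (hfree : ∀ u : ↥(Sᶜ), G.Adj w u → (σ u).1 ≠ x)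
    (hf : ∀ p ∈ P, PairAffords k
      (fun v => upcomingColors (outerNeighborFinset G S v) ((w, x) :: ms)) σ p.1 p.2) :
    ∃ σ', IsReachable G L α σ' ∧
      (∀ u : ↥(Sᶜ), (σ' u).1 = update (fun u : ↥(Sᶜ) => (σ u).1) w x u) ∧
      (∀ u : ↥(Sᶜ), (σ' u).2 = (σ u).2 + if w = u then 1 else 0) ∧
      ∀ p ∈ P,
        PairAffords k (fun v => upcomingColors (outerNeighborFinset G S v) ms) σ' p.1 p.2 := by
  obtain ⟨τ, hτ, hfix, hτf, hclear⟩ := exists_forall_pairSupport_notMem_take_one hdisj hP hσ hf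
  have hτS : ∀ u : ↥(Sᶜ), τ u = σ u := fun u => hfix u fun h => u.2 ((hS u).2 h)
  have hτfree : ∀ u, G.Adj w u → (τ u).1 ≠ x := fun u hwu => by
    by_cases hu : u ∈ S
    · have hmem : w ∈ outerNeighborFinset G S u := mem_outerNeighborFinset.2 hwu.symm
      simpa [upcomingColors_cons_of_mem hmem] using hclear u ((hS u).1 hu)
    · rw [hτS ⟨u, hu⟩]
      exact hfree ⟨u, hu⟩ hwu
  have hSw : ∀ v ∈ pairSupport P, update τ w (x, (τ w).2 + 1) v = τ v := fun v hv =>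
    update_of_ne (ne_of_mem_of_not_mem ((hS v).2 hv) w.2) ..
  refine ⟨_, hτ.recolor hx (by rwa [hτS]) hτfree, fun u => ?_, fun u => ?_, fun p hp =>
    PairAffords.congr ⟨(hτf p hp).1.of_upcomingColors_cons, (hτf p hp).2.of_upcomingColors_cons⟩
      (hSw _ (mem_pairSupport.2 ⟨p, hp, .inl rfl⟩)) (hSw _ (mem_pairSupport.2 ⟨p, hp, .inr rfl⟩))⟩
  · rcases eq_or_ne u w with rfl | hu
    · simp only [update_self]
    · rw [update_of_ne hu, update_of_ne (Subtype.coe_ne_coe.2 hu), hτS]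
  · rcases eq_or_ne u w with rfl | hu
    · simp only [update_self, hτS, if_true]
    · rw [update_of_ne (Subtype.coe_ne_coe.2 hu), hτS, if_neg hu.symm, add_zero]

theorem exists_isReachable_of_isMoveList [DecidableEq V] {P : Finset (V × V)}
    (hdisj : (P : Set (V × V)).PairwiseDisjoint fun p => ({p.1, p.2} : Finset V))
    (hP : ∀ p ∈ P, IsReliefPair G L p.1 p.2) {S : Set V} (hS : ∀ v, v ∈ S ↔ v ∈ pairSupport P)
    {ms : List (↥(Sᶜ) × ℕ)} {γ : ↥(Sᶜ) → ℕ} {σ : V → ℕ × ℕ} (hσ : IsReachable G L α σ)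
    (hms : IsMoveList (G.induce Sᶜ) (fun u => L u) ms (fun u => (σ u).1) γ)
    (hf : ∀ p ∈ P,
      PairAffords k (fun v => upcomingColors (outerNeighborFinset G S v) ms) σ p.1 p.2) :
    ∃ σ', IsReachable G L α σ' ∧ (∀ u : ↥(Sᶜ), (σ' u).1 = γ u) ∧
      (∀ u : ↥(Sᶜ), (σ' u).2 = (σ u).2 + ms.countP (·.1 = u)) ∧
      ∀ p ∈ P, PairAffords k (fun _ => []) σ' p.1 p.2 := by
  induction ms generalizing σ with
  | nil =>
    cases hms
    exact ⟨σ, hσ, fun _ => rfl, fun _ => rfl, hf⟩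
  | cons m ms ih =>
    obtain _ | ⟨hx, hne, hfree, hms⟩ := hms
    obtain ⟨τ, hτ, hτcol, hτcount, hτf⟩ :=
      exists_isReachable_update hdisj hP hS hσ hx hne hfree hf
    obtain ⟨σ', hσ', hγ, hcount, hσ'f⟩ := ih hτ (by rwa [funext hτcol]) hτf
    refine ⟨σ', hσ', hγ, fun u => ?_, hσ'f⟩
    simp only [hcount, hτcount, List.countP_cons, decide_eq_true_eq]
    omega

theorem length_upcomingColors_outerNeighborFinset_le [DecidableEq V] {S : Set V} {v : V} {r : ℕ}
    {ms : List (↥(Sᶜ) × ℕ)} (hv : (outerNeighborFinset G S v).card ≤ r)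
    (hms : ∀ u, ms.countP (·.1 = u) ≤ k) :
    (upcomingColors (outerNeighborFinset G S v) ms).length ≤ r * k :=
  calc (upcomingColors (outerNeighborFinset G S v) ms).length
    _ = ∑ u ∈ outerNeighborFinset G S v, ms.countP (·.1 = u) := length_upcomingColors ..
    _ ≤ (outerNeighborFinset G S v).card * k := Finset.sum_le_card_nsmul _ _ _ fun u _ => hms u
    _ ≤ r * k := Nat.mul_le_mul_right k hv

/-- The number `19` is `3 * 6 + 1`: six recolorings of the second vertex of a pair look `19` colors
ahead. -/
theorem PairAffords.add_le {σ : V → ℕ × ℕ} {a b : V} {s : ℕ}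
    (h : PairAffords k (fun _ => []) σ a b) (hk : 19 * s + 11 ≤ k) :
    (σ a).2 + s ≤ k ∧ (σ b).2 + s ≤ k := by
  have ha := h.1.le_add_four
  have hb := h.2.le_add_four
  omega

theorem exists_isRecolSeq_of_isReliefPair [DecidableEq V] (hα : IsLColoring G L α)
    (hβ : IsLColoring G L β) {P : Finset (V × V)}
    (hdisj : (P : Set (V × V)).PairwiseDisjoint fun p => ({p.1, p.2} : Finset V))
    (hP : ∀ p ∈ P, IsReliefPair G L p.1 p.2) {S : Set V} (hS : ∀ v, v ∈ S ↔ v ∈ pairSupport P)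
    (houter : ∀ v ∈ S, (outerNeighborFinset G S v).card ≤ 3)
    (hk : 19 * (pairSupport P).card + 11 ≤ k)
    (hrec : ∃ (m : ℕ) (φ : Fin (m + 1) → ↥(Sᶜ) → ℕ),
      IsRecolSeq (G.induce Sᶜ) (fun u => L u.1) φ (fun u => α u.1) (fun u => β u.1) ∧
      ∀ u : ↥(Sᶜ), recolorCount φ u ≤ k) :
    ∃ (M : ℕ) (ψ : Fin (M + 1) → V → ℕ),
      IsRecolSeq G L ψ α β ∧ ∀ u : V, recolorCount ψ u ≤ k := by
  obtain ⟨m, φ, hφ, hφcount⟩ := hrec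
  obtain ⟨ms, hms, hmscount⟩ := hφ.exists_isMoveList
  simp only [← hmscount] at hφcount
  have hlength : ∀ v ∈ pairSupport P,
      (upcomingColors (outerNeighborFinset G S v) ms).length ≤ 3 * k := fun v hv =>
    length_upcomingColors_outerNeighborFinset_le (houter v ((hS v).2 hv)) hφcount
  obtain ⟨τ, hτ, hτβ, hτcount, hτf⟩ := exists_isReachable_of_isMoveList hdisj hP hS
    hα.isReachable hms fun p hp =>
      ⟨.of_add_length_le _ (by simpa using hlength _ (mem_pairSupport.2 ⟨p, hp, .inl rfl⟩)),
        .of_add_length_le _ (by simpa using hlength _ (mem_pairSupport.2 ⟨p, hp, .inr rfl⟩))⟩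
  have hcard : ∀ v ∈ pairSupport P, G.degree v + 2 ≤ (L v).card := fun v hv => by
    obtain ⟨p, hp, rfl | rfl⟩ := mem_pairSupport.1 hv
    · exact le_trans (by omega) (hP p hp).card_left
    · exact le_trans (by omega) (hP p hp).card_right
  obtain ⟨σ, ⟨M, ψ, hψ, hψcount⟩, hσβ, hσfix, hσcount⟩ :=
    hτ.exists_eq_target hβ hcard fun u hu => hτβ ⟨u, mt (hS u).1 hu⟩
  refine ⟨M, ψ, funext hσβ ▸ hψ, fun v => ?_⟩
  rw [hψcount]
  by_cases hv : v ∈ pairSupport P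
  · refine (hσcount v).trans ?_
    obtain ⟨p, hp, rfl | rfl⟩ := mem_pairSupport.1 hv
    · exact ((hτf p hp).add_le hk).1
    · exact ((hτf p hp).add_le hk).2
  · rw [hσfix v hv, hτcount ⟨v, mt (hS v).1 hv⟩, zero_add]
    exact hφcount _

end Extension

theorem card_outerNeighborFinset_le_three {V : Type} {G : SimpleGraph V} [G.LocallyFinite]
    {a b c d : V} (hab : G.Adj a b) (hbc : G.Adj b c) (hcd : G.Adj c d) (hac : G.Adj a c)
    (hbd : G.Adj b d) (had : a ≠ d) (hda : G.degree a ≤ 5) (hdb : G.degree b ≤ 6)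
    (hdc : G.degree c ≤ 6) (hdd : G.degree d ≤ 5) {S : Set V} (hS : S = {a, b, c, d}) :
    ∀ v ∈ S, (outerNeighborFinset G S v).card ≤ 3 := by
  classical
  have ha := card_outerNeighborFinset_add_card_le (G := G) (S := S) (v := a) (T := {b, c})
    (by simp [hab, hac]) (by simp [hS])
  have hb := card_outerNeighborFinset_add_card_le (G := G) (S := S) (v := b) (T := {a, c, d})
    (by simp [hab.symm, hbc, hbd]) (by simp [hS])
  have hc := card_outerNeighborFinset_add_card_le (G := G) (S := S) (v := c) (T := {a, b, d})
    (by simp [hac.symm, hbc.symm, hcd]) (by simp [hS])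
  have hd := card_outerNeighborFinset_add_card_le (G := G) (S := S) (v := d) (T := {b, c})
    (by simp [hbd.symm, hcd.symm]) (by simp [hS])
  rw [Finset.card_pair hbc.ne] at ha hd
  rw [Finset.card_eq_three.2 ⟨a, c, d, hac.ne, had, hcd.ne, rfl⟩] at hb
  rw [Finset.card_eq_three.2 ⟨a, b, d, hab.ne, had, hbd.ne, rfl⟩] at hc
  intro v hv
  rw [hS] at hv
  obtain rfl | rfl | rfl | rfl := hv <;> omega

/-- The bound `87` is `19 * 4 + 11`: reaching the target colors costs each of the four vertices of
`S` at most four recolorings. -/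
theorem stmt_7_general {V : Type} (G : SimpleGraph V) [G.LocallyFinite] (k : ℕ) (hk : 87 ≤ k)
    (L : V → Finset ℕ) (α β : V → ℕ) (hα : IsLColoring G L α) (hβ : IsLColoring G L β)
    (a b c d : V) (hab : G.Adj a b) (hbc : G.Adj b c) (hcd : G.Adj c d) (hac : G.Adj a c)
    (hbd : G.Adj b d) (had : a ≠ d) (hda : G.degree a ≤ 5) (hdb : G.degree b ≤ 6)
    (hdc : G.degree c ≤ 6) (hdd : G.degree d ≤ 5) (S : Set V) (hS : S = {a, b, c, d})
    (hL : ∀ u ∈ S, 10 ≤ (L u).card)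
    (hrec : ∃ (m : ℕ) (φ : Fin (m + 1) → ↥(Sᶜ) → ℕ),
      IsRecolSeq (G.induce Sᶜ) (fun u => L u.1) φ (fun u => α u.1) (fun u => β u.1) ∧
      ∀ u : ↥(Sᶜ), recolorCount φ u ≤ k) :
    ∃ (M : ℕ) (ψ : Fin (M + 1) → V → ℕ),
      IsRecolSeq G L ψ α β ∧ ∀ u : V, recolorCount ψ u ≤ k := by
  classical
  have houter := card_outerNeighborFinset_le_three hab hbc hcd hac hbd had hda hdb hdc hdd hS
  have hLS : 10 ≤ (L a).card ∧ 10 ≤ (L b).card ∧ 10 ≤ (L c).card ∧ 10 ≤ (L d).card := by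
    simpa [hS] using hL
  have hpairs : ∀ p ∈ ({(a, b), (d, c)} : Finset (V × V)), IsReliefPair G L p.1 p.2 := by
    simp only [Finset.forall_mem_insert, Finset.mem_singleton, forall_eq]
    exact ⟨⟨hab, by omega, by omega⟩, ⟨hcd.symm, by omega, by omega⟩⟩
  have hdisj : (({(a, b), (d, c)} : Finset (V × V)) : Set (V × V)).PairwiseDisjoint
      fun p => ({p.1, p.2} : Finset V) := by
    rw [Finset.coe_pair]
    refine Set.pairwise_pair_of_symm.2 fun _ => ?_
    simp [had.symm, hac.ne.symm, hbd.ne.symm, hbc.ne.symm]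
  have hS_mem : ∀ v, v ∈ S ↔ v ∈ pairSupport {(a, b), (d, c)} := by
    simp [hS, mem_pairSupport, or_assoc, or_comm (a := _ = d)]
  have hcard : (pairSupport {(a, b), (d, c)}).card ≤ 4 :=
    (card_pairSupport_le _).trans (Nat.mul_le_mul_right 2 Finset.card_le_two)
  exact exists_isRecolSeq_of_isReliefPair hα hβ hdisj hpairs hS_mem houter (by omega) hrec

/-- configuration RC(b): if `G` contains this configuration and `G − S` has a
`k`-good recoloring sequence between the restrictions of `α` and `β` (`k ≥ 416`),
then `G` has a `k`-good recoloring sequence from `α` to `β`. -/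
theorem stmt_7 {V : Type} [Fintype V] [DecidableEq V]
    (G : SimpleGraph V) [DecidableRel G.Adj]
    (k : ℕ) (hk : 416 ≤ k)
    (L : V → Finset ℕ) (hL : ∀ u, (L u).card = 10)
    (α β : V → ℕ) (hα : IsLColoring G L α) (hβ : IsLColoring G L β)
    (a b c d : V) (hnodup : ([a, b, c, d] : List V).Nodup)
    (he1: G.Adj a b)
    (he2: G.Adj b c)
    (he3: G.Adj c d)
    (he4: G.Adj a c)
    (he5: G.Adj b d)
    (hda : G.degree a = 5)
    (hdb : G.degree b = 6)
    (hdc : G.degree c = 6)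
    (hdd : G.degree d = 5)
    (S : Set V) (hS : S = {a, b, c, d})
    (hrec : ∃ (m : ℕ) (φ : Fin (m + 1) → ↥(Sᶜ) → ℕ),
      IsRecolSeq (G.induce Sᶜ) (fun u => L u.1) φ (fun u => α u.1) (fun u => β u.1) ∧
      ∀ u : ↥(Sᶜ), recolorCount φ u ≤ k) :
    ∃ (M : ℕ) (ψ : Fin (M + 1) → V → ℕ),
      IsRecolSeq G L ψ α β ∧ ∀ u : V, recolorCount ψ u ≤ k := by
  have had : a ≠ d := by rintro rfl; simp at hnodup
  exact stmt_7_general G k (by omega) L α β hα hβ a b c d he1 he2 he3 he4 he5 had hda.le hdb.le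
    hdc.le hdd.le S hS (fun u _ => (hL u).ge) hrec
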